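/- Over a regular local ring R of Krull dimension n, any exact differential module (H(D) = 0) whose underlying R-module D is finitely generated and free is contractible: there exists an R-linear map h : D → D with d^D h + h d^D = id_D. (Key step: from the exact sequence 0 → B(D) → D → D → ⋯ → D → B(D) → 0 of length > dim R, the module of boundaries B(D) is free, so the surjection D → B(D) and inclusion B(D) → D split.) -/

import Mathlib

open IsLocalRing in
/-- The maximal ideal cannot be generated by fewer than `dim R` elements. -/
lemma dim_le_card_of_span_eq {R : Type*} [CommRing R] [IsNoetherianRing R] [IsLocalRing R]
    (s : Finset R) (hs : Ideal.span (s : Set R) = maximalIdeal R) :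
    ringKrullDim R ≤ s.card := by
  refine (ringKrullDim_le_spanFinrank_maximalIdeal (R := R)).trans ?_
  rw [← hs]
  have := Submodule.spanFinrank_span_le_ncard_of_finite (R := R) s.finite_toSet
  rw [Set.ncard_coe_finset] at this
  exact_mod_cast this

open IsLocalRing in
/-- Choice of a good parameter: part of a regular system, outside all minimal primes. -/
lemma exists_good_parameter {R : Type*} [CommRing R] [IsNoetherianRing R] [IsLocalRing R]
    (n : ℕ) (hdim : ((n + 1 : ℕ) : WithBot ℕ∞) ≤ ringKrullDim R)
    (s : Finset R) (hcard : s.card ≤ n + 1)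
    (hs : Ideal.span (s : Set R) = maximalIdeal R) :
    ∃ x ∈ maximalIdeal R, (∀ P ∈ minimalPrimes R, x ∉ P) ∧
      ∃ t : Finset R, t.card ≤ n ∧ Ideal.span {x} ⊔ Ideal.span (t : Set R) = maximalIdeal R := by
  classical
  have key : ∀ t : Finset R, t.card ≤ n → Ideal.span (t : Set R) ≠ maximalIdeal R := by
    intro t ht h
    have h1 := hdim.trans (dim_le_card_of_span_eq t h)
    have h2 : n + 1 ≤ t.card := by exact_mod_cast h1
    omega
  have hne : s.Nonempty := by
    rw [Finset.nonempty_iff_ne_empty]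
    rintro rfl
    exact key ∅ (by simp) hs
  obtain ⟨y, hy⟩ := hne
  set t := s.erase y with ht
  have htc : t.card ≤ n := by rw [ht, Finset.card_erase_of_mem hy]; omega
  have hm : maximalIdeal R = Ideal.span {y} ⊔ Ideal.span (t : Set R) := by
    rw [← hs, ← Ideal.span_union, ← Finset.insert_erase hy]; simp [ht]
  set T := Ideal.span (t : Set R) with hT
  have hTm : T ≤ maximalIdeal R := hm ▸ le_sup_right
  have hym : y ∈ maximalIdeal R := by
    rw [hm]; exact Ideal.mem_sup_left (Ideal.mem_span_singleton_self y)
  set J := T ⊔ maximalIdeal R • maximalIdeal R with hJ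
  have hmJ : ¬ maximalIdeal R ≤ J := by
    intro h
    have := Submodule.le_of_le_smul_of_le_jacobson_bot (IsNoetherian.noetherian (maximalIdeal R))
      (maximalIdeal_le_jacobson _) h
    exact key t htc (le_antisymm hTm this)
  have hmP : ∀ P ∈ minimalPrimes R, ¬ maximalIdeal R ≤ P := by
    intro P hP h
    have hPp : P.IsPrime := hP.1.1
    have hPm : P = maximalIdeal R := le_antisymm (le_maximalIdeal hPp.ne_top) h
    have h0 : P.height = 0 := Ideal.height_eq_zero_iff.2 hP
    have h1 := maximalIdeal_height_eq_ringKrullDim (R := R)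
    rw [← hPm, h0] at h1
    rw [← h1] at hdim
    have : n + 1 ≤ 0 := by exact_mod_cast hdim
    omega
  have hav : ¬ ((maximalIdeal R : Set R) ⊆ ⋃ I ∈ insert J (minimalPrimes R), (I : Set R)) := by
    intro hsub
    have hpr : ∀ I ∈ insert J (minimalPrimes R), I ≠ J → I ≠ J → (id I).IsPrime := by
      intro I hI h1 _
      rcases hI with rfl | hI
      · exact absurd rfl h1
      · exact hI.1.1
    obtain ⟨I, hI, hle⟩ := (Ideal.subset_union_prime_finite (f := id)
      ((minimalPrimes.finite_of_isNoetherianRing R).insert J) J J hpr).1 hsub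
    rcases hI with rfl | hI
    · exact hmJ hle
    · exact hmP I hI hle
  rw [Set.not_subset] at hav
  obtain ⟨x, hxm, hx⟩ := hav
  simp only [Set.mem_iUnion, not_exists, Set.mem_insert_iff, SetLike.mem_coe] at hx
  refine ⟨x, hxm, fun P hP => hx P (Or.inr hP), t, htc, ?_⟩
  refine le_antisymm (sup_le ((Ideal.span_singleton_le_iff_mem _).2 hxm) hTm) ?_
  have hxm' : x ∈ Ideal.span {y} ⊔ T := hm ▸ hxm
  obtain ⟨b, hb, z, hz, hbz⟩ := Submodule.mem_sup.1 hxm'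
  obtain ⟨a, rfl⟩ := Ideal.mem_span_singleton'.1 hb
  have ha : IsUnit a := by
    by_contra ha
    have ha' : a ∈ maximalIdeal R := (mem_maximalIdeal a).2 ha
    refine hx J (Or.inl rfl) ?_
    rw [← hbz, add_comm]
    exact Submodule.add_mem_sup hz (Submodule.smul_mem_smul ha' hym)
  rw [hm]
  refine sup_le ((Ideal.span_singleton_le_iff_mem _).2 ?_) le_sup_right
  rw [← Ideal.unit_mul_mem_iff_mem _ ha]
  have h3 : a * y = x - z := by rw [← hbz]; ring
  rw [h3]
  exact Ideal.sub_mem _ (Ideal.mem_sup_left (Ideal.mem_span_singleton_self x))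
    (Ideal.mem_sup_right hz)

open IsLocalRing in
/-- The quotient by a good parameter is again regular local. -/
lemma quotient_parameter {R : Type*} [CommRing R] [IsNoetherianRing R] [IsLocalRing R]
    (n : ℕ) (hdim : ((n + 1 : ℕ) : WithBot ℕ∞) ≤ ringKrullDim R)
    (x : R) (hx : x ∈ maximalIdeal R) (t : Finset R) (ht : t.card ≤ n)
    (hs : Ideal.span {x} ⊔ Ideal.span (t : Set R) = maximalIdeal R) :
    ∃ _ : IsLocalRing (R ⧸ Ideal.span {x}),
      (n : WithBot ℕ∞) ≤ ringKrullDim (R ⧸ Ideal.span {x}) ∧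
      ∃ t' : Finset (R ⧸ Ideal.span {x}), t'.card ≤ n ∧
        Ideal.span (t' : Set (R ⧸ Ideal.span {x})) = maximalIdeal (R ⧸ Ideal.span {x}) := by
  classical
  have hle : Ideal.span {x} ≤ maximalIdeal R := (Ideal.span_singleton_le_iff_mem _).2 hx
  have hnt : Nontrivial (R ⧸ Ideal.span {x}) :=
    Ideal.Quotient.nontrivial_iff.2 (ne_top_of_le_ne_top (maximalIdeal.isMaximal R).ne_top hle)
  have hloc : IsLocalRing (R ⧸ Ideal.span {x}) :=
    IsLocalRing.of_surjective' (Ideal.Quotient.mk _) Ideal.Quotient.mk_surjective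
  refine ⟨hloc, ?_, t.image (Ideal.Quotient.mk _), Finset.card_image_le.trans ht, ?_⟩
  · have h1 := Ideal.height_le_ringKrullDim_quotient_add_one hx
    rw [maximalIdeal_height_eq_ringKrullDim] at h1
    have h2 := hdim.trans h1
    push_cast at h2
    exact ENat.WithBot.add_le_add_one_right_iff.1 h2
  · rw [Finset.coe_image, ← Ideal.map_span]
    have h1 : Ideal.map (Ideal.Quotient.mk (Ideal.span {x})) (maximalIdeal R)
        = Ideal.map (Ideal.Quotient.mk (Ideal.span {x})) (Ideal.span (t : Set R)) := by
      rw [← hs, Ideal.map_sup, Ideal.map_quotient_self, bot_sup_eq]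
    rw [← h1]
    have h2 : (Ideal.comap (Ideal.Quotient.mk (Ideal.span {x}))
        (maximalIdeal (R ⧸ Ideal.span {x}))) = maximalIdeal R :=
      eq_maximalIdeal (Ideal.comap_isMaximal_of_surjective _ Ideal.Quotient.mk_surjective)
    rw [← h2, Ideal.map_comap_of_surjective _ Ideal.Quotient.mk_surjective]

open IsLocalRing in
/-- A regular local ring is a domain. -/
lemma regular_isDomain (n : ℕ) : ∀ {R : Type*} [CommRing R] [IsNoetherianRing R] [IsLocalRing R]
    (_ : (n : WithBot ℕ∞) ≤ ringKrullDim R)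
    (s : Finset R) (_ : s.card ≤ n)
    (_ : Ideal.span (s : Set R) = maximalIdeal R), IsDomain R := by
  induction n with
  | zero =>
    intro R _ _ _ _ s hcard hs
    have : s = ∅ := by simpa using hcard
    subst this
    have hf : IsField R := isField_iff_maximalIdeal_eq.2 (by simpa using hs.symm)
    exact hf.isDomain
  | succ n ih =>
    intro R _ _ _ hdim s hcard hs
    obtain ⟨x, hx, hmin, t, ht, hxt⟩ := exists_good_parameter n hdim s hcard hs
    obtain ⟨hloc, hd, t', ht', hs'⟩ := quotient_parameter n hdim x hx t ht hxt
    have hdom := ih hd t' ht' hs'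
    have hp : (Ideal.span {x}).IsPrime := (Ideal.Quotient.isDomain_iff_prime _).1 hdom
    obtain ⟨P, hP, hPx⟩ := Ideal.exists_minimalPrimes_le (bot_le : (⊥ : Ideal R) ≤ Ideal.span {x})
    have hPp : P.IsPrime := hP.1.1
    have hxP : x ∉ P := hmin P hP
    have hP0 : P = ⊥ := by
      refine Submodule.eq_bot_of_le_smul_of_le_jacobson_bot (maximalIdeal R) P
        (IsNoetherian.noetherian P) ?_ (maximalIdeal_le_jacobson _)
      intro p hpP
      obtain ⟨a, rfl⟩ := Ideal.mem_span_singleton'.1 (hPx hpP)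
      have haP : a ∈ P := (hPp.mem_or_mem hpP).resolve_right hxP
      rw [mul_comm]
      exact Submodule.smul_mem_smul hx haP
    subst hP0
    exact IsDomain.of_bot_isPrime R

/-- The split case: over a field. -/
lemma contractible_of_field {K V : Type*} [Field K] [AddCommGroup V] [Module K V]
    (d : V →ₗ[K] V) (hd2 : ∀ v, d (d v) = 0) (hex : ∀ v, d v = 0 → ∃ w, d w = v) :
    ∃ h : V →ₗ[K] V, d ∘ₗ h + h ∘ₗ d = LinearMap.id := by
  obtain ⟨g, hg⟩ := d.rangeRestrict.exists_rightInverse_of_surjective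
    (LinearMap.range_rangeRestrict d)
  have hg' : ∀ b : LinearMap.range d, d (g b) = b := fun b =>
    congrArg Subtype.val (LinearMap.congr_fun hg b)
  let p : V →ₗ[K] LinearMap.range d :=
    LinearMap.codRestrict _ (LinearMap.id - g ∘ₗ d.rangeRestrict) (fun v => by
      obtain ⟨w, hw⟩ := hex (v - g (d.rangeRestrict v)) (by simp [hg'])
      exact ⟨w, by simpa using hw⟩)
  have hp : ∀ v, (p v : V) = v - g (d.rangeRestrict v) := fun v => rfl
  have hpd : ∀ v, p (d v) = d.rangeRestrict v := by
    intro v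
    apply Subtype.ext
    rw [hp]
    have : d.rangeRestrict (d v) = 0 := Subtype.ext (hd2 v)
    rw [this]; simp
  refine ⟨g ∘ₗ p, ?_⟩
  ext v
  simp only [LinearMap.add_apply, LinearMap.comp_apply, LinearMap.id_apply, hg', hpd, hp]
  abel

open IsLocalRing Matrix in
/-- Matrix form of the theorem. -/
lemma matrix_contractible (n : ℕ) : ∀ {R : Type*} [CommRing R] [IsNoetherianRing R] [IsLocalRing R]
    (_ : (n : WithBot ℕ∞) ≤ ringKrullDim R)
    (s : Finset R) (_ : s.card ≤ n)
    (_ : Ideal.span (s : Set R) = maximalIdeal R)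
    {ι : Type} [Fintype ι] [DecidableEq ι] (D : Matrix ι ι R) (_ : D * D = 0)
    (_ : ∀ v, D *ᵥ v = 0 → ∃ w, D *ᵥ w = v), ∃ H : Matrix ι ι R, D * H + H * D = 1 := by
  induction n with
  | zero =>
    intro R _ _ _ _ s hcard hs ι _ _ D hD hex
    have : s = ∅ := by simpa using hcard
    subst this
    have hf : IsField R := isField_iff_maximalIdeal_eq.2 (by simpa using hs.symm)
    let _ : Field R := hf.toField
    obtain ⟨h, hh⟩ := contractible_of_field (Matrix.toLin' D)
      (fun v => by simp [hD]) (by simpa using hex)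
    refine ⟨LinearMap.toMatrix' h, ?_⟩
    have := congrArg LinearMap.toMatrix' hh
    simpa [LinearMap.toMatrix'_comp] using this
  | succ n ih =>
    intro R _ _ _ hdim s hcard hs ι _ _ D hD hex
    obtain ⟨x, hx, hmin, t, ht, hxt⟩ := exists_good_parameter n hdim s hcard hs
    obtain ⟨hloc, hd, t', ht', hs'⟩ := quotient_parameter n hdim x hx t ht hxt
    have hdom : IsDomain R := regular_isDomain (n + 1) hdim s hcard hs
    have hx0 : x ≠ 0 := by
      rintro rfl
      obtain ⟨P, hP, -⟩ := Ideal.exists_minimalPrimes_le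
        (bot_le : (⊥ : Ideal R) ≤ maximalIdeal R)
      exact hmin P hP P.zero_mem
    set q := Ideal.Quotient.mk (Ideal.span {x}) with hq
    have hqs : Function.Surjective q := Ideal.Quotient.mk_surjective
    have hqx : q x = 0 := Ideal.Quotient.eq_zero_iff_mem.2 (Ideal.mem_span_singleton_self x)
    have hmv : ∀ v : ι → R, D.map q *ᵥ (q ∘ v) = q ∘ (D *ᵥ v) := by
      intro v; ext i; exact (RingHom.map_mulVec q D v i).symm
    obtain ⟨H', hH'⟩ := ih hd t' ht' hs' (D.map q)
      (by rw [← Matrix.map_mul, hD]; simp) (by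
        intro v' hv'
        obtain ⟨v, rfl⟩ : ∃ v : ι → R, q ∘ v = v' := hqs.comp_left v'
        rw [hmv] at hv'
        have h1 : ∀ i, ∃ a, a * x = (D *ᵥ v) i := fun i =>
          Ideal.mem_span_singleton'.1 (Ideal.Quotient.eq_zero_iff_mem.1 (congrFun hv' i))
        choose w hw using h1
        have h2 : D *ᵥ v = x • w := by
          ext i; rw [← hw i]; simp [mul_comm]
        have h3 : D *ᵥ w = 0 := by
          have : x • (D *ᵥ w) = 0 := by
            rw [← Matrix.mulVec_smul, ← h2, Matrix.mulVec_mulVec, hD, Matrix.zero_mulVec]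
          exact (smul_eq_zero.1 this).resolve_left hx0
        obtain ⟨u, hu⟩ := hex w h3
        obtain ⟨z, hz⟩ := hex (v - x • u) (by
          rw [Matrix.mulVec_sub, Matrix.mulVec_smul, hu, h2, sub_self])
        refine ⟨q ∘ z, ?_⟩
        rw [hmv, hz]
        ext i
        simp [hqx])
    obtain ⟨H, rfl⟩ : ∃ H : Matrix ι ι R, H.map q = H' :=
      ⟨H'.map (Function.surjInv hqs), by ext i j; simp [Function.surjInv_eq]⟩
    set U := D * H + H * D with hU
    have hUq : U.map q = 1 := by
      rw [← hH', ← Matrix.map_mul, ← Matrix.map_mul, ← Matrix.map_add _ (map_add q)]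
    have hdet : IsUnit U.det := by
      by_contra hn
      have h1 : q U.det = 1 := by
        rw [RingHom.map_det, RingHom.mapMatrix_apply, hUq, Matrix.det_one]
      have h2 : U.det - 1 ∈ Ideal.span {x} := by
        rw [← Ideal.Quotient.eq_zero_iff_mem, map_sub, map_one, ← hq, h1, sub_self]
      have h3 : U.det - 1 ∈ maximalIdeal R :=
        (Ideal.span_singleton_le_iff_mem _).2 hx h2
      have h4 : U.det ∈ maximalIdeal R := (mem_maximalIdeal _).2 hn
      have h5 : (1 : R) ∈ maximalIdeal R := by
        have := Ideal.sub_mem _ h4 h3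
        simpa using this
      exact (maximalIdeal.isMaximal R).ne_top ((Ideal.eq_top_iff_one _).2 h5)
    have hcomm : D * U = U * D := by
      rw [hU, mul_add, add_mul, ← mul_assoc, hD, mul_assoc H D D, hD, mul_assoc]; simp
    have hcomm' : D * U⁻¹ = U⁻¹ * D := by
      calc D * U⁻¹ = U⁻¹ * (U * D) * U⁻¹ := by
            rw [← mul_assoc, Matrix.nonsing_inv_mul _ hdet, one_mul]
        _ = U⁻¹ * D * (U * U⁻¹) := by rw [← hcomm]; simp only [mul_assoc]
        _ = U⁻¹ * D := by rw [Matrix.mul_nonsing_inv _ hdet, mul_one]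
    refine ⟨U⁻¹ * H, ?_⟩
    rw [← mul_assoc, hcomm', mul_assoc, mul_assoc, ← mul_add, ← hU,
      Matrix.nonsing_inv_mul _ hdet]


/-- Over a regular local (Noetherian) ring `R` — expressed by saying
that the maximal ideal is generated by `n` elements where `n` is the Krull dimension of
`R` — every exact differential module `(M, d)` whose underlying module is finitely
generated and free is contractible: there is `h : M → M` with `d h + h d = id`. -/
theorem exact_free_differential_module_contractible_over_regular_local
    {R : Type*} [CommRing R] [IsNoetherianRing R] [IsLocalRing R]
    (n : ℕ) (hdim : ringKrullDim R = n)
    (s : Finset R) (hcard : s.card = n)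
    (hreg : Ideal.span (s : Set R) = IsLocalRing.maximalIdeal R)
    {M : Type*} [AddCommGroup M] [Module R M] [Module.Finite R M] [Module.Free R M]
    (d : M →ₗ[R] M) (hd2 : d ∘ₗ d = 0)
    (hexact : LinearMap.ker d = LinearMap.range d) :
    ∃ h : M →ₗ[R] M, d ∘ₗ h + h ∘ₗ d = LinearMap.id := by
  classical
  obtain ⟨k, ⟨b⟩⟩ : ∃ k : ℕ, Nonempty (Module.Basis (Fin k) R M) :=
    ⟨_, ⟨Module.finBasis R M⟩⟩
  obtain ⟨H, hH⟩ := matrix_contractible n hdim.ge s hcard.le hreg (LinearMap.toMatrix b b d)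
    (by rw [← LinearMap.toMatrix_comp, hd2, map_zero]) (by
      intro v hv
      obtain ⟨m, rfl⟩ : ∃ m : M, (b.repr m : Fin k → R) = v :=
        ⟨b.equivFun.symm v, b.equivFun.apply_symm_apply v⟩
      rw [LinearMap.toMatrix_mulVec_repr] at hv
      have h0 : d m = 0 := b.repr.map_eq_zero_iff.1 (DFunLike.coe_injective hv)
      have h1 : m ∈ LinearMap.range d := hexact ▸ LinearMap.mem_ker.2 h0
      obtain ⟨w, rfl⟩ := h1
      exact ⟨b.repr w, LinearMap.toMatrix_mulVec_repr b b d w⟩)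
  refine ⟨Matrix.toLin b b H, (LinearMap.toMatrix b b).injective ?_⟩
  rw [map_add, LinearMap.toMatrix_comp b b b, LinearMap.toMatrix_comp b b b,
    LinearMap.toMatrix_toLin, LinearMap.toMatrix_id, hH]
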